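/- Let T > 0 and let (H_n) be a sequence of set-valued maps from [0,T] to ℝ^m that is uniformly integrally bounded (there is an integrable g : [0,T] → ℝ₊ with sup_{x∈H_n(t)} ‖x‖ ≤ g(t) for all n and t). Let H be a set-valued map on [0,T] with nonempty convex images such that for every τ ∈ [0,T], limsup_n H_n(τ) ⊂ H(τ), where x ∈ limsup_n A_n iff every neighborhood of x intersects infinitely many A_n. If h_n is an integrable selection of H_n for each n (h_n(u) ∈ H_n(u) for all u ∈ [0,T]), then along some subsequence (h_n) converges weakly in L¹([0,T], ℝ^m) to an integrable selection h of H (h(u) ∈ H(u) for every u ∈ [0,T]); in particular, along this subsequence, ∫_0^τ h_n(u) du → ∫_0^τ h(u) du for every τ ∈ [0,T]. -/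

import Mathlib

open MeasureTheory Filter Topology Metric Set Pointwise

noncomputable section

/-- `ℝ^m` with the Euclidean norm. -/
abbrev Euc (m : ℕ) := EuclideanSpace ℝ (Fin m)

/-- A standard set-valued map `F : ℝ^m ⇒ ℝ^m`: nonempty compact convex values,
closed graph, and linear growth. -/
def IsStandardSVM {m : ℕ} (F : Euc m → Set (Euc m)) : Prop :=
  (∀ x, (F x).Nonempty ∧ IsCompact (F x) ∧ Convex ℝ (F x)) ∧
  IsClosed {p : Euc m × Euc m | p.2 ∈ F p.1} ∧
  ∃ c > 0, ∀ x, ∀ z ∈ F x, ‖z‖ ≤ c * (1 + ‖x‖)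

/-- A solution of the differential inclusion `dx/dt ∈ F x`: an absolutely continuous
curve `z : ℝ → ℝ^m` (written as the integral of a locally integrable derivative `h`)
with `h t ∈ F (z t)` for almost every `t`. -/
def IsSolution {m : ℕ} (F : Euc m → Set (Euc m)) (z : ℝ → Euc m) : Prop :=
  Continuous z ∧ ∃ h : ℝ → Euc m,
    (∀ a b : ℝ, IntervalIntegrable h volume a b) ∧
    (∀ᵐ t ∂volume, h t ∈ F (z t)) ∧
    ∀ t : ℝ, z t = z 0 + ∫ u in (0:ℝ)..t, h u

/-- `Φ_t(x)`: the set of points reached at time `t` by solutions starting at `x`. -/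
def PhiT {m : ℕ} (F : Euc m → Set (Euc m)) (t : ℝ) (x : Euc m) : Set (Euc m) :=
  {y | ∃ z : ℝ → Euc m, IsSolution F z ∧ z 0 = x ∧ z t = y}

/-- `ω_Φ(x) = ⋂_{t ≥ 0} closure (Φ_{[t,∞)}(x))`. -/
def omegaLimitSV {m : ℕ} (F : Euc m → Set (Euc m)) (x : Euc m) : Set (Euc m) :=
  ⋂ t ∈ Ici (0:ℝ), closure {y | ∃ s ≥ t, y ∈ PhiT F s x}

/-- An attractor for the set-valued dynamical system induced by `F`: a nonempty,
compact, invariant set admitting a neighborhood `U` with `Φ_t(U) ⊆ N^ε(A)` for all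
`t` large enough. -/
def IsAttractorSV {m : ℕ} (F : Euc m → Set (Euc m)) (A : Set (Euc m)) : Prop :=
  A.Nonempty ∧ IsCompact A ∧
  (∀ x ∈ A, ∃ z : ℝ → Euc m, IsSolution F z ∧ z 0 = x ∧ Set.range z ⊆ A) ∧
  ∃ U : Set (Euc m), IsOpen U ∧ A ⊆ U ∧
    ∀ ε > 0, ∃ tε > 0, ∀ t ≥ tε, ∀ x ∈ U, PhiT F t x ⊆ Metric.thickening ε A

/-- The basin of attraction `B(A) = {x | ω_Φ(x) ⊆ A}`. -/
def basinSV {m : ℕ} (F : Euc m → Set (Euc m)) (A : Set (Euc m)) : Set (Euc m) :=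
  {x | omegaLimitSV F x ⊆ A}

/-- The limit set `L(X) = ⋂_{t ≥ 0} closure {X s : s ≥ t}` of a path. -/
def limitSet {m : ℕ} (X : ℝ → Euc m) : Set (Euc m) :=
  ⋂ t ∈ Ici (0:ℝ), closure {y | ∃ s ≥ t, X s = y}

/-- `inf_{z ∈ S_Φ} sup_{u ∈ [0,T]} ‖z u - Y u‖`. -/
def distToSol {m : ℕ} (F : Euc m → Set (Euc m)) (Y : ℝ → Euc m) (T : ℝ) : ℝ :=
  sInf {d | ∃ z : ℝ → Euc m, IsSolution F z ∧ d = ⨆ u : Icc (0:ℝ) T, ‖z u - Y u‖}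

/-- Asymptotic pseudotrajectory of the set-valued dynamical system induced by `F`. -/
def IsAPT {m : ℕ} (F : Euc m → Set (Euc m)) (X : ℝ → Euc m) : Prop :=
  ∀ T > 0, Tendsto (fun t => distToSol F (fun u => X (t + u)) T) atTop (𝓝 0)

/-- A point `p` is attainable by the process `X`: for every `t > 0` and every
neighborhood `U` of `p`, `P(∃ s ≥ t, X s ∈ U) > 0`. -/
def Attainable {m : ℕ} {Ω : Type*} [MeasurableSpace Ω] (μ : Measure Ω)
    (X : ℝ → Ω → Euc m) (p : Euc m) : Prop :=
  ∀ t > 0, ∀ U ∈ 𝓝 p, 0 < μ {ω | ∃ s ≥ t, X s ω ∈ U}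

/-- `τ_n = γ_1 + ⋯ + γ_n`. -/
def tauOf (γ : ℕ → ℝ) (n : ℕ) : ℝ := ∑ i ∈ Finset.range n, γ (i + 1)

/-- `m(t) = sup {j | τ_j ≤ t}`. -/
def mIdx (γ : ℕ → ℝ) (t : ℝ) : ℕ := sSup {j | tauOf γ j ≤ t}

/-- Hypothesis H1: there is `w t α T` decreasing to `0` in `t` dominating the
conditional probability that `sup_{s ≥ t} inf_{z ∈ S_Φ} sup_{u ∈ [0,T]} ‖z u − X (s+u)‖ ≥ α`. -/
def HypH1 {m : ℕ} {Ω : Type*} [MeasurableSpace Ω] (μ : Measure Ω)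
    (𝓕 : ℝ → MeasurableSpace Ω) (F : Euc m → Set (Euc m)) (X : ℝ → Ω → Euc m) : Prop :=
  ∃ w : ℝ → ℝ → ℝ → ℝ,
    (∀ α > 0, ∀ T > 0, Antitone (fun t => w t α T) ∧ Tendsto (fun t => w t α T) atTop (𝓝 0)) ∧
    ∀ α > 0, ∀ T > 0, ∀ t : ℝ, ∀ᵐ ω ∂μ,
      (μ[Set.indicator {ω' | α ≤ ⨆ s : Ici t, distToSol F (fun u => X ((s : ℝ) + u) ω') T}
          (fun _ => (1:ℝ)) | 𝓕 t]) ω ≤ w t α T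

/-- `F^δ(x) = {y | ∃ z ∈ B(x,δ), dist(y, F z) < δ}`, with the convention `F^0 = F`. -/
def Fdelta {m : ℕ} (F : Euc m → Set (Euc m)) (δ : ℝ) (x : Euc m) : Set (Euc m) :=
  if δ = 0 then F x
  else {y | ∃ z : Euc m, dist z x < δ ∧ Metric.infDist y (F z) < δ}

/-- A `(δ(·), V(·))`-perturbed solution of `dx/dt ∈ F x`. -/
def IsPerturbedSolution {m : ℕ} (F : Euc m → Set (Euc m)) (δ : ℝ → ℝ) (V : ℝ → Euc m)
    (y : ℝ → Euc m) : Prop :=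
  Continuous y ∧ (∀ t > 0, 0 < δ t) ∧ Antitone δ ∧ Tendsto δ atTop (𝓝 0) ∧
  (∀ a b : ℝ, IntervalIntegrable V volume a b) ∧
  (∀ T > 0, Tendsto (fun t => ⨆ u : Icc (0:ℝ) T, ‖∫ r in t..(t + (u : ℝ)), V r‖)
    atTop (𝓝 0)) ∧
  ∃ h : ℝ → Euc m, (∀ a b : ℝ, IntervalIntegrable h volume a b) ∧
    (∀ᵐ t ∂(volume.restrict (Ioi (0:ℝ))), h t - V t ∈ Fdelta F (δ t) (y t)) ∧
    ∀ t ∈ Ici (0:ℝ), y t = y 0 + ∫ u in (0:ℝ)..t, h u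

/-- `Δ(n,T) = sup_{n < k ≤ m(τ_n + T)} ‖∑_{i=n}^{k-1} γ_{i+1} U_{i+1}‖`. -/
def DeltaNT {m : ℕ} {Ω : Type*} (γ : ℕ → ℝ) (U : ℕ → Ω → Euc m) (T : ℝ) (n : ℕ)
    (ω : Ω) : ℝ :=
  ⨆ k : {k : ℕ // n < k ∧ k ≤ mIdx γ (tauOf γ n + T)},
    ‖∑ i ∈ Finset.Ico n (k : ℕ), γ (i + 1) • U (i + 1) ω‖

/-- Condition (bruit2): the conditional probability that `sup_{m ≥ n} Δ(m,T) ≥ ε` is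
dominated by some `w n ε T` decreasing to `0` in `n`. -/
def Bruit2 {m : ℕ} {Ω : Type*} [MeasurableSpace Ω] (μ : Measure Ω)
    (𝓕 : ℕ → MeasurableSpace Ω) (γ : ℕ → ℝ) (U : ℕ → Ω → Euc m) : Prop :=
  ∃ w : ℕ → ℝ → ℝ → ℝ,
    (∀ ε > 0, ∀ T > 0, Antitone (fun n => w n ε T) ∧ Tendsto (fun n => w n ε T) atTop (𝓝 0)) ∧
    ∀ ε > 0, ∀ T > 0, ∀ n : ℕ, ∀ᵐ ω ∂μ,
      (μ[Set.indicator {ω' | ε ≤ ⨆ k : Ici n, DeltaNT γ U T (k : ℕ) ω'}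
          (fun _ => (1:ℝ)) | 𝓕 n]) ω ≤ w n ε T

/-- Topological `limsup` of a sequence of sets: points whose every neighborhood
meets infinitely many of the sets. -/
def setLimsup {X : Type*} [TopologicalSpace X] (A : ℕ → Set X) : Set X :=
  {y | ∀ U ∈ 𝓝 y, {n | (U ∩ A n).Nonempty}.Infinite}

/-- The operator `Λ^δ` on continuous paths `[0,T] → ℝ^m` (with `Λ^0 = Λ`). -/
def LambdaD {m : ℕ} (F : Euc m → Set (Euc m)) (T : ℝ) (hT : 0 ≤ T) (δ : ℝ)
    (z : C(Icc (0:ℝ) T, Euc m)) : Set C(Icc (0:ℝ) T, Euc m) :=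
  {y | ∃ h : ℝ → Euc m, IntervalIntegrable h volume 0 T ∧
    (∀ u : Icc (0:ℝ) T, h u ∈ Fdelta F δ (z u)) ∧
    ∀ τ : Icc (0:ℝ) T, y τ = z ⟨0, Set.left_mem_Icc.mpr hT⟩ + ∫ u in (0:ℝ)..(τ : ℝ), h u}

/-- `Φ^T(M) = closure (⋃_{s ∈ [0,T]} Φ_s(M))`. -/
def PhiTM {m : ℕ} (F : Euc m → Set (Euc m)) (T : ℝ) (M : Set (Euc m)) : Set (Euc m) :=
  closure (⋃ s ∈ Icc (0:ℝ) T, ⋃ x ∈ M, PhiT F s x)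

/-- `‖F‖ = sup_{x ∈ Φ^T(M)} sup_{y ∈ F x} ‖y‖`. -/
def normF {m : ℕ} (F : Euc m → Set (Euc m)) (T : ℝ) (M : Set (Euc m)) : ℝ :=
  sSup {r | ∃ x ∈ PhiTM F T M, ∃ y ∈ F x, r = ‖y‖}

/-- `K_C`: Lipschitz paths with constant `‖F‖ + C + 1` starting in `M`. -/
def KC {m : ℕ} (F : Euc m → Set (Euc m)) (T : ℝ) (hT : 0 ≤ T) (M : Set (Euc m))
    (C : ℝ) : Set C(Icc (0:ℝ) T, Euc m) :=
  {y | (∀ u v : Icc (0:ℝ) T, ‖y u - y v‖ ≤ (normF F T M + C + 1) * |(u : ℝ) - (v : ℝ)|) ∧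
    y ⟨0, Set.left_mem_Icc.mpr hT⟩ ∈ M}

/-- `S_{[0,T]}`: restrictions to `[0,T]` of solutions starting in `M`. -/
def SolRestrict {m : ℕ} (F : Euc m → Set (Euc m)) (T : ℝ) (M : Set (Euc m)) :
    Set C(Icc (0:ℝ) T, Euc m) :=
  {y | ∃ z : ℝ → Euc m, IsSolution F z ∧ z 0 ∈ M ∧ ∀ u : Icc (0:ℝ) T, y u = z u}

/-- A generalised stochastic approximation process relative to `F`. -/
def IsGSAP {m : ℕ} {Ω : Type*} [MeasurableSpace Ω] (μ : Measure Ω)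
    (F : Euc m → Set (Euc m)) (M : Set (Euc m)) (γ : ℕ → ℝ)
    (Fn : ℕ → Euc m → Set (Euc m)) (U : ℕ → Ω → Euc m) (x : ℕ → Ω → Euc m) : Prop :=
  (∀ n, 0 < γ n) ∧
  Tendsto (fun n => ∑ i ∈ Finset.range n, γ (i + 1)) atTop atTop ∧
  Tendsto γ atTop (𝓝 0) ∧
  (∃ C, ∀ n ω, ‖U n ω‖ ≤ C) ∧
  (∀ n ω, x (n + 1) ω - x n ω - γ (n + 1) • U (n + 1) ω ∈ γ (n + 1) • Fn n (x n ω)) ∧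
  (∀ T > 0, ∀ᵐ ω ∂μ, Tendsto
    (fun n => ⨆ k : {k : ℕ // ∑ i ∈ Finset.Ico n k, γ i ≤ T},
      ‖∑ i ∈ Finset.Ico n (k : ℕ), γ (i + 1) • U (i + 1) ω‖) atTop (𝓝 0)) ∧
  (∀ n ω, x n ω ∈ M) ∧
  (∀ δ > 0, ∃ n₀ : ℕ, ∀ n ≥ n₀, ∀ ω, Fn n (x n ω) ⊆ Fdelta F δ (x n ω))

/-!
A sequence dominated by an integrable `g` is `g` times a bounded sequence, so weak sequential
compactness of balls in `L²` of the finite measure `g μ` gives a subsequence converging weakly in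
`L¹(μ)` to some `F`. Testing against vectors `p` times indicator functions and applying a reverse
Fatou argument yields `⟪p, F u⟫ ≤ limsup ⟪p, hₙ u⟫` for almost every `u`, simultaneously for all
`p` in a countable dense set. The cluster points of the bounded sequence `hₙ u` form a compact
set, whose convex hull is again compact by Carathéodory's theorem, so by Hahn–Banach `F u` lies in
this hull, hence in `H u`. Finally `F` is modified on a null set.
-/

section ConvexHull

open Module

lemma exists_mem_convexHull_range_of_mem_convexHull {𝕜 E : Type*} [Field 𝕜] [LinearOrder 𝕜]
    [IsStrictOrderedRing 𝕜] [AddCommGroup E] [Module 𝕜 E] [FiniteDimensional 𝕜 E] {K : Set E}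
    {v : E} (hv : v ∈ convexHull 𝕜 K) :
    ∃ z : Fin (finrank 𝕜 E + 1) → E, (∀ i, z i ∈ K) ∧ v ∈ convexHull 𝕜 (range z) := by
  let t := Caratheodory.minCardFinsetOfMemConvexHull hv
  have card_le : Fintype.card t ≤ Fintype.card (Fin (finrank 𝕜 E + 1)) := by
    have h_indep := Caratheodory.affineIndependent_minCardFinsetOfMemConvexHull hv
    rw [Fintype.card_fin]
    exact h_indep.card_le_finrank_succ.trans (by gcongr; exact Submodule.finrank_le _)
  obtain ⟨e⟩ := Function.Embedding.nonempty_of_card_le card_le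
  have : Nonempty t := (Caratheodory.minCardFinsetOfMemConvexHull_nonempty hv).to_subtype
  let z (i : Fin (finrank 𝕜 E + 1)) : t := Function.invFun e i
  refine ⟨fun i => z i, fun i => Caratheodory.minCardFinsetOfMemConvexHull_subseteq hv (z i).2, ?_⟩
  have range_eq : range (fun i => (z i : E)) = t := by
    rw [range_comp' Subtype.val, (Function.invFun_surjective e.injective).range_eq, image_univ,
      Subtype.range_coe]
  rw [range_eq]
  exact Caratheodory.mem_minCardFinsetOfMemConvexHull hv

lemma convexHull_range_eq_image_stdSimplex {𝕜 ι E : Type*} [Field 𝕜] [LinearOrder 𝕜]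
    [IsStrictOrderedRing 𝕜] [Fintype ι] [AddCommGroup E] [Module 𝕜 E] (z : ι → E) :
    convexHull 𝕜 (range z) = (fun w : ι → 𝕜 => ∑ i, w i • z i) '' stdSimplex 𝕜 ι := by
  classical
  have image_single :
      Fintype.linearCombination 𝕜 z '' range (fun i => Pi.single i 1) = range z := by
    rw [← range_comp]
    congr 1 with i
    simp
  rw [← image_single, ← LinearMap.image_convexHull, convexHull_rangle_single_eq_stdSimplex]
  rfl

lemma isCompact_convexHull {E : Type*} [AddCommGroup E] [Module ℝ E] [FiniteDimensional ℝ E]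
    [TopologicalSpace E] [ContinuousAdd E] [ContinuousSMul ℝ E] {K : Set E} (hK : IsCompact K) :
    IsCompact (convexHull ℝ K) := by
  let combo (q : (Fin (finrank ℝ E + 1) → ℝ) × (Fin (finrank ℝ E + 1) → E)) : E :=
    ∑ i, q.1 i • q.2 i
  have hull_eq : convexHull ℝ K = combo '' (stdSimplex ℝ _ ×ˢ univ.pi fun _ => K) := by
    refine Subset.antisymm (fun v hv => ?_) ?_
    · obtain ⟨z, hzK, hvz⟩ := exists_mem_convexHull_range_of_mem_convexHull hv
      rw [convexHull_range_eq_image_stdSimplex] at hvz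
      obtain ⟨w, hw, rfl⟩ := hvz
      exact ⟨(w, z), ⟨hw, fun i _ => hzK i⟩, rfl⟩
    · rintro _ ⟨⟨w, z⟩, ⟨hw, hz⟩, rfl⟩
      exact (convex_convexHull ℝ K).sum_mem (fun i _ => hw.1 i) hw.2
        fun i _ => subset_convexHull ℝ K (hz i trivial)
  rw [hull_eq]
  exact ((isCompact_stdSimplex ℝ _).prod (isCompact_univ_pi fun _ => hK)).image (by fun_prop)

end ConvexHull

section ClusterPoints

variable {ι X : Type*} [TopologicalSpace X] {l : Filter ι} {x : ι → X} {K : Set X}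

lemma isCompact_setOf_mapClusterPt [T2Space X] (hK : IsCompact K) (hx : ∀ᶠ i in l, x i ∈ K) :
    IsCompact {y | MapClusterPt y l x} := by
  refine hK.of_isClosed_subset isClosed_setOfPred_clusterPt fun y hy => ?_
  by_contra hyK
  obtain ⟨i, hi, hi'⟩ :=
    ((hy.frequently (hK.isClosed.isOpen_compl.mem_nhds hyK)).and_eventually hx).exists
  exact hi hi'

lemma exists_mapClusterPt_apply_eq {Y : Type*} [TopologicalSpace Y] [T2Space Y] {f : X → Y}
    (hf : Continuous f) (hK : IsCompact K) (hx : ∀ᶠ i in l, x i ∈ K) {L : Y}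
    (hL : MapClusterPt L l fun i => f (x i)) : ∃ y, MapClusterPt y l x ∧ f y = L := by
  obtain ⟨U, hUl, hUL⟩ := mapClusterPt_iff_ultrafilter.1 hL
  obtain ⟨y, -, hy⟩ := hK.ultrafilter_le_nhds' (U.map x) (hUl hx)
  exact ⟨y, mapClusterPt_iff_ultrafilter.2 ⟨U, hUl, hy⟩,
    tendsto_nhds_unique ((hf.tendsto y).comp hy) hUL⟩

lemma exists_mapClusterPt_apply_eq_limsup [l.NeBot] {f : X → ℝ} (hf : Continuous f)
    (hK : IsCompact K) (hx : ∀ᶠ i in l, x i ∈ K) :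
    ∃ y, MapClusterPt y l x ∧ f y = limsup (fun i => f (x i)) l := by
  obtain ⟨a, ha⟩ := hK.bddBelow_image hf.continuousOn
  obtain ⟨b, hb⟩ := hK.bddAbove_image hf.continuousOn
  have bounded_below : IsBoundedUnder (· ≥ ·) l fun i => f (x i) :=
    isBoundedUnder_of_eventually_ge (hx.mono fun i hi => ha (mem_image_of_mem f hi))
  have bounded_above : IsBoundedUnder (· ≤ ·) l fun i => f (x i) :=
    isBoundedUnder_of_eventually_le (hx.mono fun i hi => hb (mem_image_of_mem f hi))
  exact exists_mapClusterPt_apply_eq hf hK hx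
    (MapClusterPt.limsup bounded_below.isCoboundedUnder_le bounded_above)

lemma mem_setLimsup_of_mapClusterPt {A : ℕ → Set X} {x : ℕ → X} (hx : ∀ n, x n ∈ A n) {y : X}
    (hy : MapClusterPt y atTop x) : y ∈ setLimsup A := fun _ hU =>
  (Nat.frequently_atTop_iff_infinite.1 (hy.frequently hU)).mono fun n hn => ⟨x n, hn, hx n⟩

end ClusterPoints

open RealInnerProductSpace

section Separation

variable {E : Type*} [NormedAddCommGroup E] [InnerProductSpace ℝ E] {D K : Set E} {v : E}

lemma mem_of_forall_dense_exists_inner_le [CompleteSpace E] (hK : IsCompact K)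
    (hK_convex : Convex ℝ K) (hD : Dense D) (h : ∀ p ∈ D, ∃ y ∈ K, ⟪p, v⟫ ≤ ⟪p, y⟫) : v ∈ K := by
  by_contra hv
  obtain ⟨ℓ, a, hKa, hav⟩ := geometric_hahn_banach_closed_point hK_convex hK.isClosed hv
  let p := (InnerProductSpace.toDual ℝ E).symm ℓ
  have separates : ∀ᶠ q in 𝓝 p, ∀ y ∈ K, ⟪q, y⟫ < ⟪q, v⟫ := by
    refine hK.eventually_forall_of_forall_eventually fun y hy => ?_
    refine ContinuousAt.eventually_lt (by fun_prop) (by fun_prop) ?_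
    simpa [p] using (hKa y hy).trans hav
  obtain ⟨q, hqD, hq⟩ :=
    ((mem_closure_iff_frequently.1 (hD p)).and_eventually separates).exists
  obtain ⟨y, hyK, hy⟩ := h q hqD
  exact (hq y hyK).not_ge hy

lemma mem_convexHull_mapClusterPt_of_inner_le_limsup [FiniteDimensional ℝ E] {ι : Type*}
    {l : Filter ι} [l.NeBot] {x : ι → E} (hK : IsCompact K) (hx : ∀ᶠ i in l, x i ∈ K)
    (hD : Dense D) (h : ∀ p ∈ D, ⟪p, v⟫ ≤ limsup (fun i => ⟪p, x i⟫) l) :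
    v ∈ convexHull ℝ {y | MapClusterPt y l x} := by
  have := FiniteDimensional.complete ℝ E
  refine mem_of_forall_dense_exists_inner_le
    (isCompact_convexHull (isCompact_setOf_mapClusterPt hK hx)) (convex_convexHull ℝ _) hD
    fun p hp => ?_
  obtain ⟨y, hy, hpy⟩ := exists_mapClusterPt_apply_eq_limsup (f := fun z => ⟪p, z⟫)
    (by fun_prop) hK hx
  exact ⟨y, subset_convexHull ℝ _ hy, (h p hp).trans_eq hpy.symm⟩

end Separation

section HilbertSpace

variable {𝕜 E : Type*} [RCLike 𝕜] [NormedAddCommGroup E] [InnerProductSpace 𝕜 E] {C : ℝ}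

lemma exists_subseq_tendsto_inner_of_separable [CompleteSpace E]
    [TopologicalSpace.SeparableSpace E] {f : ℕ → E} (hf : ∀ n, ‖f n‖ ≤ C) :
    ∃ φ : ℕ → ℕ, StrictMono φ ∧ ∃ F : E, ∀ w : E,
      Tendsto (fun k => inner 𝕜 (f (φ k)) w) atTop (𝓝 (inner 𝕜 F w)) := by
  let dual (n : ℕ) : WeakDual 𝕜 E :=
    StrongDual.toWeakDual (InnerProductSpace.toDual 𝕜 E (f n))
  have dual_mem (n : ℕ) :
      dual n ∈ WeakDual.toStrongDual ⁻¹' closedBall (0 : StrongDual 𝕜 E) C := by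
    rw [mem_preimage, mem_closedBall_zero_iff]
    exact ((InnerProductSpace.toDual 𝕜 E).norm_map (f n)).trans_le (hf n)
  obtain ⟨ℓ, -, φ, hφ, hlim⟩ := WeakDual.isSeqCompact_closedBall 𝕜 E 0 C dual_mem
  refine ⟨φ, hφ, (InnerProductSpace.toDual 𝕜 E).symm (WeakDual.toStrongDual ℓ), fun w => ?_⟩
  rw [InnerProductSpace.toDual_symm_apply]
  exact ((WeakDual.eval_continuous w).tendsto ℓ).comp hlim

lemma exists_subseq_tendsto_inner [CompleteSpace E] {f : ℕ → E} (hf : ∀ n, ‖f n‖ ≤ C) :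
    ∃ φ : ℕ → ℕ, StrictMono φ ∧ ∃ F : E, ∀ w : E,
      Tendsto (fun k => inner 𝕜 (f (φ k)) w) atTop (𝓝 (inner 𝕜 F w)) := by
  let V := (Submodule.span 𝕜 (range f)).topologicalClosure
  have hfV (n : ℕ) : f n ∈ V :=
    Submodule.le_topologicalClosure _ (Submodule.subset_span (mem_range_self n))
  have : TopologicalSpace.SeparableSpace V :=
    (countable_range f).isSeparable.span.closure.separableSpace
  obtain ⟨φ, hφ, F, hF⟩ := exists_subseq_tendsto_inner_of_separable (𝕜 := 𝕜)
    (f := fun n => (⟨f n, hfV n⟩ : V)) hf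
  refine ⟨φ, hφ, F, fun w => ?_⟩
  simpa only [Submodule.inner_orthogonalProjectionOnto_eq_of_mem_left]
    using hF (V.orthogonalProjectionOnto w)

lemma tendsto_of_forall_tendsto_inner [FiniteDimensional 𝕜 E] {ι : Type*} {l : Filter ι}
    {f : ι → E} {F : E} (h : ∀ p : E, Tendsto (fun i => inner 𝕜 p (f i)) l (𝓝 (inner 𝕜 p F))) :
    Tendsto f l (𝓝 F) := by
  let b := stdOrthonormalBasis 𝕜 E
  simpa only [b.sum_repr'] using
    tendsto_finsetSum Finset.univ fun i _ => (h (b i)).smul_const (b i)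

end HilbertSpace

section ReverseFatou

variable {α : Type*} [MeasurableSpace α] {μ : Measure α} {f : ℕ → α → ℝ} {F g : α → ℝ}

lemma ae_le_iSup_of_tendsto_setIntegral (hf : ∀ n, Integrable (f n) μ) (hF : Integrable F μ)
    (hg : Integrable g μ) (hfg : ∀ n, f n ≤ᵐ[μ] g)
    (hlim : ∀ s, MeasurableSet s → μ s < ⊤ →
      Tendsto (fun n => ∫ u in s, f n u ∂μ) atTop (𝓝 (∫ u in s, F u ∂μ))) :
    F ≤ᵐ[μ] fun u => ⨆ n, f n u := by
  have hfg : ∀ᵐ u ∂μ, ∀ n, f n u ≤ g u := ae_all_iff.2 hfg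
  have le_sup (n : ℕ) : f n ≤ᵐ[μ] fun u => ⨆ n, f n u := by
    filter_upwards [hfg] with u hu
    exact le_ciSup (f := fun n => f n u) ⟨g u, forall_mem_range.2 hu⟩ n
  have sup_integrable : Integrable (fun u => ⨆ n, f n u) μ :=
    integrable_of_le_of_le (AEMeasurable.iSup fun n => (hf n).aemeasurable).aestronglyMeasurable
      (le_sup 0) (hfg.mono fun u hu => ciSup_le hu) (hf 0) hg
  refine ae_le_of_forall_setIntegral_le hF sup_integrable fun s hs hμs => ?_
  exact le_of_tendsto' (hlim s hs hμs) fun n =>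
    setIntegral_mono_ae (hf n).integrableOn sup_integrable.integrableOn (le_sup n)

lemma ae_le_limsup_of_tendsto_setIntegral (hf : ∀ n, Integrable (f n) μ) (hF : Integrable F μ)
    (hg : Integrable g μ) (hfg : ∀ n, f n ≤ᵐ[μ] g)
    (hlim : ∀ s, MeasurableSet s → μ s < ⊤ →
      Tendsto (fun n => ∫ u in s, f n u ∂μ) atTop (𝓝 (∫ u in s, F u ∂μ))) :
    ∀ᵐ u ∂μ, F u ≤ limsup (fun n => f n u) atTop := by
  have le_tail_sup (k : ℕ) : F ≤ᵐ[μ] fun u => ⨆ n, f (n + k) u :=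
    ae_le_iSup_of_tendsto_setIntegral (fun n => hf (n + k)) hF hg (fun n => hfg (n + k))
      fun s hs hμs => (hlim s hs hμs).comp (tendsto_add_atTop_nat k)
  filter_upwards [ae_all_iff.2 le_tail_sup, ae_all_iff.2 hfg] with u hu hug
  refine le_limsup_of_le (isBoundedUnder_of ⟨g u, hug⟩) fun b hb => ?_
  obtain ⟨k, hk⟩ := eventually_atTop.1 hb
  exact (hu k).trans (ciSup_le fun n => hk _ (Nat.le_add_left k n))

end ReverseFatou

section WeakL1

variable {α ι E : Type*} [MeasurableSpace α] {μ : Measure α} [NormedAddCommGroup E]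
  [InnerProductSpace ℝ E] {f : ι → α → E} {l : Filter ι} {F : α → E}

/-- Weak convergence `f i ⇀ F` in `L¹(μ; E)` along `l`, with the dual pairing against
`L^∞(μ; E)` given by the inner product of `E`. Functions are not bundled with integrability
proofs: integrability of `f i` and `F` is assumed separately where it matters. -/
def TendstoWeaklyL1 (f : ι → α → E) (l : Filter ι) (F : α → E) (μ : Measure α) : Prop :=
  ∀ w : α → E, MemLp w ⊤ μ →
    Tendsto (fun i => ∫ u, ⟪f i u, w u⟫ ∂μ) l (𝓝 (∫ u, ⟪F u, w u⟫ ∂μ))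

namespace TendstoWeaklyL1

lemma congr_ae {f' : ι → α → E} {F' : α → E} (h : TendstoWeaklyL1 f l F μ)
    (hf : ∀ i, f i =ᵐ[μ] f' i) (hF : F =ᵐ[μ] F') : TendstoWeaklyL1 f' l F' μ := by
  have pairing_congr {p q : α → E} (hpq : p =ᵐ[μ] q) (w : α → E) :
      ∫ u, ⟪p u, w u⟫ ∂μ = ∫ u, ⟪q u, w u⟫ ∂μ :=
    integral_congr_ae (hpq.mono fun u hu => congrArg (⟪·, w u⟫) hu)
  intro w hw
  simpa only [pairing_congr (hf _), pairing_congr hF] using h w hw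

lemma of_withDensity {G : α → NNReal} (hG : AEMeasurable G μ)
    (h : TendstoWeaklyL1 f l F (μ.withDensity fun u => G u)) :
    TendstoWeaklyL1 (fun i u => G u • f i u) l (fun u => G u • F u) μ := by
  have pairing_eq (p w : α → E) :
      ∫ u, ⟪p u, w u⟫ ∂(μ.withDensity fun u => G u) = ∫ u, ⟪G u • p u, w u⟫ ∂μ := by
    simp only [integral_withDensity_eq_integral_smul₀ hG, NNReal.smul_def, real_inner_smul_left,
      smul_eq_mul]
  intro w hw
  have hac : (μ.withDensity fun u => G u) ≪ μ := withDensity_absolutelyContinuous _ _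
  have hw' : MemLp w ⊤ (μ.withDensity fun u => G u) :=
    ⟨hw.1.mono_ac hac, by
      simpa only [eLpNorm_exponent_top] using (eLpNormEssSup_mono_measure w hac).trans_lt hw.2⟩
  simpa only [pairing_eq] using h w hw'

lemma tendsto_setIntegral_inner (h : TendstoWeaklyL1 f l F μ) {s : Set α} (hs : MeasurableSet s)
    (p : E) :
    Tendsto (fun i => ∫ u in s, ⟪p, f i u⟫ ∂μ) l (𝓝 (∫ u in s, ⟪p, F u⟫ ∂μ)) := by
  have pairing_indicator (q : α → E) :
      ∫ u, ⟪q u, s.indicator (fun _ => p) u⟫ ∂μ = ∫ u in s, ⟪p, q u⟫ ∂μ := by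
    rw [← integral_indicator hs]
    congr 1 with u
    by_cases hu : u ∈ s <;> simp [hu, real_inner_comm]
  simpa only [pairing_indicator] using h _ ((memLp_top_const p).indicator hs)

lemma tendsto_setIntegral [FiniteDimensional ℝ E] (h : TendstoWeaklyL1 f l F μ)
    (hf : ∀ i, Integrable (f i) μ) (hF : Integrable F μ) {s : Set α} (hs : MeasurableSet s) :
    Tendsto (fun i => ∫ u in s, f i u ∂μ) l (𝓝 (∫ u in s, F u ∂μ)) := by
  have := FiniteDimensional.complete ℝ E
  refine tendsto_of_forall_tendsto_inner (𝕜 := ℝ) fun p => ?_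
  simpa only [integral_inner (hf _).integrableOn, integral_inner hF.integrableOn]
    using h.tendsto_setIntegral_inner hs p

lemma tendsto_intervalIntegral [FiniteDimensional ℝ E] {f : ι → ℝ → E} {F : ℝ → E} {a b c : ℝ}
    (h : TendstoWeaklyL1 f l F (volume.restrict (Icc a b)))
    (hf : ∀ i, IntegrableOn (f i) (Icc a b)) (hF : IntegrableOn F (Icc a b)) (hc : c ∈ Icc a b) :
    Tendsto (fun i => ∫ u in a..c, f i u) l (𝓝 (∫ u in a..c, F u)) := by
  have hsub : Ioc a c ⊆ Icc a b := Ioc_subset_Icc_self.trans (Icc_subset_Icc_right hc.2)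
  simpa only [intervalIntegral.integral_of_le hc.1, Measure.restrict_restrict measurableSet_Ioc,
    inter_eq_left.2 hsub] using h.tendsto_setIntegral hf hF (s := Ioc a c) measurableSet_Ioc

lemma ae_mem_convexHull_mapClusterPt [FiniteDimensional ℝ E] {f : ℕ → α → E} {g : α → ℝ}
    (h : TendstoWeaklyL1 f atTop F μ) (hf : ∀ n, Integrable (f n) μ) (hF : Integrable F μ)
    (hg : Integrable g μ) (hfg : ∀ n, ∀ᵐ u ∂μ, ‖f n u‖ ≤ g u) :
    ∀ᵐ u ∂μ, F u ∈ convexHull ℝ {y | MapClusterPt y atTop fun n => f n u} := by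
  obtain ⟨D, hD_countable, hD⟩ := TopologicalSpace.exists_countable_dense E
  have inner_le_limsup (p : E) :
      ∀ᵐ u ∂μ, ⟪p, F u⟫ ≤ limsup (fun n => ⟪p, f n u⟫) atTop := by
    refine ae_le_limsup_of_tendsto_setIntegral (fun n => (hf n).const_inner p) (hF.const_inner p)
      (hg.const_mul ‖p‖) (fun n => ?_) fun s hs _ => h.tendsto_setIntegral_inner hs p
    filter_upwards [hfg n] with u hu
    exact (real_inner_le_norm _ _).trans (by gcongr)
  filter_upwards [(ae_ball_iff hD_countable).2 fun p _ => inner_le_limsup p, ae_all_iff.2 hfg]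
    with u hu hfgu
  have := FiniteDimensional.proper_real E
  exact mem_convexHull_mapClusterPt_of_inner_le_limsup (isCompact_closedBall 0 (g u))
    (Eventually.of_forall fun n => mem_closedBall_zero_iff.2 (hfgu n)) hD hu

end TendstoWeaklyL1

variable [CompleteSpace E]

lemma exists_subseq_tendsto_integral_inner {f : ℕ → α → E} (hf : ∀ n, MemLp (f n) 2 μ)
    {C : NNReal} (hC : ∀ n, eLpNorm (f n) 2 μ ≤ C) :
    ∃ φ : ℕ → ℕ, StrictMono φ ∧ ∃ F : α → E, MemLp F 2 μ ∧ ∀ w : α → E, MemLp w 2 μ →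
      Tendsto (fun k => ∫ u, ⟪f (φ k) u, w u⟫ ∂μ) atTop (𝓝 (∫ u, ⟪F u, w u⟫ ∂μ)) := by
  have norm_le (n : ℕ) : ‖(hf n).toLp (f n)‖ ≤ C := by
    rw [Lp.norm_toLp]
    exact ENNReal.toReal_le_coe_of_le_coe (hC n)
  obtain ⟨φ, hφ, F, hF⟩ := exists_subseq_tendsto_inner (𝕜 := ℝ) norm_le
  refine ⟨φ, hφ, F, Lp.memLp F, fun w hw => ?_⟩
  have inner_eq {p : α → E} (P : Lp E 2 μ) (hP : P =ᵐ[μ] p) :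
      ⟪P, hw.toLp w⟫ = ∫ u, ⟪p u, w u⟫ ∂μ := by
    rw [L2.inner_def]
    refine integral_congr_ae ?_
    filter_upwards [hP, hw.coeFn_toLp] with u hPu hwu
    rw [hPu, hwu]
  simpa only [inner_eq _ (hf _).coeFn_toLp, inner_eq F (EventuallyEq.refl _ _)]
    using hF (hw.toLp w)

lemma exists_subseq_tendstoWeaklyL1_of_bounded [IsFiniteMeasure μ] {f : ℕ → α → E}
    (hf : ∀ n, AEStronglyMeasurable (f n) μ) {C : ℝ} (hC : ∀ n, ∀ᵐ u ∂μ, ‖f n u‖ ≤ C) :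
    ∃ φ : ℕ → ℕ, StrictMono φ ∧ ∃ F : α → E, Integrable F μ ∧
      TendstoWeaklyL1 (fun k => f (φ k)) atTop F μ := by
  have norm_bound_ne_top : μ univ ^ (2 : ENNReal).toReal⁻¹ * ENNReal.ofReal C ≠ ⊤ :=
    ENNReal.mul_ne_top (ENNReal.rpow_ne_top_of_nonneg (by positivity) (measure_ne_top μ _))
      ENNReal.ofReal_ne_top
  obtain ⟨φ, hφ, F, hF, hlim⟩ := exists_subseq_tendsto_integral_inner
    (fun n => MemLp.of_bound (hf n) C (hC n)) fun n =>
      (eLpNorm_le_of_ae_bound (hC n)).trans_eq (ENNReal.coe_toNNReal norm_bound_ne_top).symm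
  exact ⟨φ, hφ, F, hF.integrable (by norm_num), fun w hw => hlim w (hw.mono_exponent le_top)⟩

lemma exists_subseq_tendstoWeaklyL1_of_dominated {f : ℕ → α → E} {g : α → ℝ}
    (hf : ∀ n, AEStronglyMeasurable (f n) μ) (hg : Integrable g μ)
    (hfg : ∀ n, ∀ᵐ u ∂μ, ‖f n u‖ ≤ g u) :
    ∃ φ : ℕ → ℕ, StrictMono φ ∧ ∃ F : α → E, Integrable F μ ∧
      TendstoWeaklyL1 (fun k => f (φ k)) atTop F μ := by
  let G (u : α) : NNReal := (g u).toNNReal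
  have hG : AEMeasurable G μ := hg.aemeasurable.real_toNNReal
  have hac : (μ.withDensity fun u => G u) ≪ μ := withDensity_absolutelyContinuous _ _
  have : IsFiniteMeasure (μ.withDensity fun u => G u) := isFiniteMeasure_withDensity_ofReal hg.2
  have norm_le (n : ℕ) : ∀ᵐ u ∂μ, ‖f n u‖ ≤ G u :=
    (hfg n).mono fun u hu => hu.trans (Real.le_coe_toNNReal (g u))
  have quotient_bound (n : ℕ) : ∀ᵐ u ∂μ, ‖(G u)⁻¹ • f n u‖ ≤ 1 := by
    filter_upwards [norm_le n] with u hu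
    rw [NNReal.smul_def, norm_smul, NNReal.coe_inv, norm_inv, NNReal.norm_eq]
    exact inv_mul_le_one_of_le₀ hu (G u).2
  obtain ⟨φ, hφ, F, hF, hlim⟩ := exists_subseq_tendstoWeaklyL1_of_bounded
    (μ := μ.withDensity fun u => G u) (f := fun n u => (G u)⁻¹ • f n u)
    (fun n => (hG.inv.aestronglyMeasurable.smul (hf n)).mono_ac hac)
    fun n => hac.ae_le (quotient_bound n)
  refine ⟨φ, hφ, fun u => G u • F u, (integrable_withDensity_iff_integrable_smul₀ hG).1 hF,
    (hlim.of_withDensity hG).congr_ae (fun k => ?_) (EventuallyEq.refl _ _)⟩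
  filter_upwards [norm_le (φ k)] with u hu
  -- Where `G u = 0` the junk value `(G u)⁻¹ = 0` is harmless: domination forces `f n u = 0`.
  rcases eq_or_ne (G u) 0 with hGu | hGu
  · simp_all
  · exact smul_inv_smul₀ hGu _

end WeakL1

lemma exists_ae_eq_forall_mem_of_ae_mem {α β : Type*} [MeasurableSpace α] {μ : Measure α}
    {F : α → β} {H : α → Set β} (hF : ∀ᵐ u ∂μ, F u ∈ H u) :
    ∃ h : α → β, F =ᵐ[μ] h ∧ ∀ u, (H u).Nonempty → h u ∈ H u := by
  classical
  let h (u : α) : β := if hu : F u ∉ H u ∧ (H u).Nonempty then hu.2.some else F u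
  refine ⟨h, hF.mono fun u hu => by simp [h, hu], fun u hu => ?_⟩
  by_cases hFu : F u ∈ H u
  · simp [h, hFu]
  · simpa [h, hFu, hu] using hu.some_mem

theorem weak_limit_of_selections_convex_general {α E : Type*} [MeasurableSpace α]
    {μ : Measure α} [NormedAddCommGroup E] [InnerProductSpace ℝ E] [FiniteDimensional ℝ E]
    {Hn : ℕ → α → Set E} {H : α → Set E} {g : α → ℝ} {hn : ℕ → α → E}
    (hg : Integrable g μ) (hbound : ∀ n, ∀ᵐ u ∂μ, ‖hn n u‖ ≤ g u)
    (hHconv : ∀ᵐ u ∂μ, Convex ℝ (H u))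
    (hlimsup : ∀ᵐ u ∂μ, setLimsup (fun n => Hn n u) ⊆ H u)
    (hint : ∀ n, Integrable (hn n) μ) (hsel : ∀ n, ∀ᵐ u ∂μ, hn n u ∈ Hn n u) :
    ∃ φ : ℕ → ℕ, StrictMono φ ∧ ∃ h : α → E, Integrable h μ ∧
      (∀ u, (H u).Nonempty → h u ∈ H u) ∧ TendstoWeaklyL1 (fun k => hn (φ k)) atTop h μ := by
  have := FiniteDimensional.complete ℝ E
  obtain ⟨φ, hφ, F, hF, hlim⟩ := exists_subseq_tendstoWeaklyL1_of_dominated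
    (fun n => (hint n).aestronglyMeasurable) hg hbound
  have hFH : ∀ᵐ u ∂μ, F u ∈ H u := by
    filter_upwards [hHconv, hlimsup, ae_all_iff.2 hsel,
      hlim.ae_mem_convexHull_mapClusterPt (fun k => hint (φ k)) hF hg fun k => hbound (φ k)]
      with u hconv hsub hmem hFu
    refine convexHull_min (fun y hy => hsub ?_) hconv hFu
    exact mem_setLimsup_of_mapClusterPt hmem (MapClusterPt.of_comp hφ.tendsto_atTop hy)
  obtain ⟨h, hFh, hhH⟩ := exists_ae_eq_forall_mem_of_ae_mem hFH
  exact ⟨φ, hφ, h, hF.congr hFh, hhH, hlim.congr_ae (fun _ => EventuallyEq.refl _ _) hFh⟩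

open RealInnerProductSpace in
/-- (Proposition `convsimple`, convex case.) Given uniformly
integrally bounded set-valued maps `H_n` on `[0,T]` with `limsup_n H_n(τ) ⊆ H(τ)`
pointwise, `H` having nonempty convex images, any sequence of integrable selections
`h_n` of `H_n` admits a subsequence converging weakly in `L¹` to an integrable
selection `h` of `H`; in particular the primitives converge pointwise. -/
theorem weak_limit_of_selections_convex
    {m : ℕ} (T : ℝ) (hT : 0 < T)
    (Hn : ℕ → ℝ → Set (Euc m)) (H : ℝ → Set (Euc m))
    (hbound : ∃ g : ℝ → ℝ, IntegrableOn g (Icc (0:ℝ) T) volume ∧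
      ∀ (n : ℕ), ∀ t ∈ Icc (0:ℝ) T, ∀ x ∈ Hn n t, ‖x‖ ≤ g t)
    (hHne : ∀ τ ∈ Icc (0:ℝ) T, (H τ).Nonempty)
    (hHconv : ∀ τ ∈ Icc (0:ℝ) T, Convex ℝ (H τ))
    (hlimsup : ∀ τ ∈ Icc (0:ℝ) T, setLimsup (fun n => Hn n τ) ⊆ H τ)
    (hn : ℕ → ℝ → Euc m)
    (hsel : ∀ n : ℕ, IntegrableOn (hn n) (Icc (0:ℝ) T) volume ∧
      ∀ u ∈ Icc (0:ℝ) T, hn n u ∈ Hn n u) :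
    ∃ φ : ℕ → ℕ, StrictMono φ ∧ ∃ h : ℝ → Euc m,
      IntegrableOn h (Icc (0:ℝ) T) volume ∧
      (∀ u ∈ Icc (0:ℝ) T, h u ∈ H u) ∧
      (∀ g : ℝ → Euc m, MemLp g ⊤ (volume.restrict (Icc (0:ℝ) T)) →
        Tendsto (fun k => ∫ u in Icc (0:ℝ) T, ⟪hn (φ k) u, g u⟫)
          atTop (𝓝 (∫ u in Icc (0:ℝ) T, ⟪h u, g u⟫))) ∧
      ∀ τ ∈ Icc (0:ℝ) T,
        Tendsto (fun k => ∫ u in (0:ℝ)..τ, hn (φ k) u) atTop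
          (𝓝 (∫ u in (0:ℝ)..τ, h u)) := by
  obtain ⟨g, hg, hbound⟩ := hbound
  have on_Icc {P : ℝ → Prop} (hP : ∀ u ∈ Icc (0 : ℝ) T, P u) :
      ∀ᵐ u ∂volume.restrict (Icc (0 : ℝ) T), P u := ae_restrict_of_forall_mem measurableSet_Icc hP
  obtain ⟨φ, hφ, h, hh, hmem, hlim⟩ := weak_limit_of_selections_convex_general hg
    (fun n => on_Icc fun u hu => hbound n u hu _ ((hsel n).2 u hu)) (on_Icc hHconv)
    (on_Icc hlimsup) (fun n => (hsel n).1) fun n => on_Icc (hsel n).2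
  exact ⟨φ, hφ, h, hh, fun u hu => hmem u (hHne u hu), hlim,
    fun _ => hlim.tendsto_intervalIntegral (fun k => (hsel (φ k)).1) hh⟩
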